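/- Let G be a weighted graph with terminal set K and let X, Y ⊆ K be nonempty subsets with X ∩ Y = ∅. Then S(X) ∩ S(Y) = ∅; that is, minimum-cardinality minimizers realizing h_K^G(X) and h_K^G(Y) are disjoint. -/

import Mathlib

open scoped Classical

/-- A weighted graph with a distinguished embedded set of terminals indexed by `κ`:
a finite vertex type `V`, an embedding `ι : κ ↪ V` of the terminals, and a symmetric
nonnegative capacity function `c` on pairs of vertices. -/
structure WeightedGraph (κ : Type) where
  V : Type
  [fintypeV : Fintype V]
  ι : κ ↪ V
  c : V → V → ℝ
  symm : ∀ u v, c u v = c v u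
  nonneg : ∀ u v, 0 ≤ c u v

namespace WeightedGraph

variable {κ : Type}

instance (G : WeightedGraph κ) : Fintype G.V := G.fintypeV

/-- The cut function `h_G(A) = Σ_{u ∈ A, v ∉ A} c(u,v)`. -/
noncomputable def cutval (G : WeightedGraph κ) (A : Finset G.V) : ℝ :=
  ∑ u ∈ A, ∑ v ∈ Aᶜ, G.c u v

/-- The vertex sets realizing the terminal partition `(U, K \ U)`. -/
noncomputable def cutSets (G : WeightedGraph κ) (U : Finset κ) : Finset (Finset G.V) :=
  Finset.univ.filter fun A => ∀ x : κ, G.ι x ∈ A ↔ x ∈ U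

theorem cutSets_nonempty (G : WeightedGraph κ) (U : Finset κ) : (G.cutSets U).Nonempty := by
  refine ⟨U.image G.ι, ?_⟩
  simp [cutSets, Finset.mem_image, G.ι.injective.eq_iff]

/-- The terminal cut function `h_K^G(U) = min { h_G(A) : A ∩ K = U }`. -/
noncomputable def termCut (G : WeightedGraph κ) (U : Finset κ) : ℝ :=
  (G.cutSets U).inf' (G.cutSets_nonempty U) G.cutval

/-- `H` is a mimicking network for `(G, K)`: all minimum terminal cut values agree. -/
def IsMimicking (G H : WeightedGraph κ) : Prop :=
  ∀ U : Finset κ, H.termCut U = G.termCut U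

/-- `H` is a quotient (contraction) of `G` along the surjection `f`: terminals map to
terminals, and capacities between distinct classes are sums of the original capacities. -/
def IsQuotient (G H : WeightedGraph κ) (f : G.V → H.V) : Prop :=
  Function.Surjective f ∧ (∀ x : κ, f (G.ι x) = H.ι x) ∧
    ∀ y z : H.V, y ≠ z →
      H.c y z = ∑ u ∈ Finset.univ.filter (fun u => f u = y),
        ∑ v ∈ Finset.univ.filter (fun v => f v = z), G.c u v

end WeightedGraph

/-- `A` is a minimum-cardinality minimizer realizing the minimum terminal cut
`h_K^G(U)`: it induces the terminal partition `(U, K \ U)`, achieves the minimum cut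
value, and has minimum cardinality among all such minimizers. -/
def WeightedGraph.IsMinCutSet {κ : Type} (G : WeightedGraph κ) (U : Finset κ)
    (A : Finset G.V) : Prop :=
  (∀ x : κ, G.ι x ∈ A ↔ x ∈ U) ∧ G.cutval A = G.termCut U ∧
    ∀ B : Finset G.V, (∀ x : κ, G.ι x ∈ B ↔ x ∈ U) → G.cutval B = G.termCut U →
      A.card ≤ B.card

theorem WeightedGraph.two_cutval {κ : Type} (G : WeightedGraph κ) (A : Finset G.V) :
    2 * G.cutval A = ∑ u, ∑ v, if (u ∈ A ↔ v ∈ A) then 0 else G.c u v := by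
  have h1 : G.cutval A = ∑ u, ∑ v, if (u ∈ A ∧ v ∉ A) then G.c u v else 0 := by
    unfold WeightedGraph.cutval
    rw [← Finset.sum_filter_add_sum_filter_not Finset.univ (fun u => u ∈ A)
      (fun u => ∑ v, if (u ∈ A ∧ v ∉ A) then G.c u v else 0)]
    have e2 : ∑ u ∈ Finset.univ.filter (fun u => ¬ u ∈ A),
        (∑ v, if (u ∈ A ∧ v ∉ A) then G.c u v else 0) = 0 := by
      refine Finset.sum_eq_zero fun u hu => Finset.sum_eq_zero fun v _ => ?_
      have := (Finset.mem_filter.mp hu).2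
      simp [this]
    rw [e2, add_zero]
    refine Finset.sum_congr (by ext; simp) fun u hu => ?_
    have hu' : u ∈ A := by simpa using hu
    simp only [hu', true_and]
    rw [← Finset.sum_filter]
    exact Finset.sum_congr (by ext; simp) fun _ _ => rfl
  have h2 : G.cutval A = ∑ u, ∑ v, if (v ∈ A ∧ u ∉ A) then G.c u v else 0 := by
    rw [h1, Finset.sum_comm]
    refine Finset.sum_congr rfl fun u _ => Finset.sum_congr rfl fun v _ => ?_
    rw [G.symm]
  rw [two_mul]
  nth_rewrite 1 [h1]
  rw [h2, ← Finset.sum_add_distrib]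
  refine Finset.sum_congr rfl fun u _ => ?_
  rw [← Finset.sum_add_distrib]
  refine Finset.sum_congr rfl fun v _ => ?_
  by_cases hu : u ∈ A <;> by_cases hv : v ∈ A <;> simp [hu, hv]

theorem WeightedGraph.cutval_posimodular {κ : Type} (G : WeightedGraph κ) (A B : Finset G.V) :
    G.cutval (A \ B) + G.cutval (B \ A) ≤ G.cutval A + G.cutval B := by
  have key : 2 * G.cutval (A \ B) + 2 * G.cutval (B \ A) ≤ 2 * G.cutval A + 2 * G.cutval B := by
    simp only [G.two_cutval, ← Finset.sum_add_distrib]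
    refine Finset.sum_le_sum fun u _ => Finset.sum_le_sum fun v _ => ?_
    have := G.nonneg u v
    by_cases h1 : u ∈ A <;> by_cases h2 : v ∈ A <;> by_cases h3 : u ∈ B <;>
      by_cases h4 : v ∈ B <;> simp [h1, h2, h3, h4, this]
  linarith

theorem WeightedGraph.termCut_le {κ : Type} (G : WeightedGraph κ) (U : Finset κ)
    (A : Finset G.V) (h : ∀ x : κ, G.ι x ∈ A ↔ x ∈ U) : G.termCut U ≤ G.cutval A :=
  Finset.inf'_le _ (by simpa [WeightedGraph.cutSets] using h)

/-- if `X, Y ⊆ K` are nonempty and disjoint then `S(X) ∩ S(Y) = ∅` for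
any minimum-cardinality minimizers realizing `h_K^G(X)` and `h_K^G(Y)`. -/
theorem minCutSet_disjoint_of_disjoint {κ : Type} (G : WeightedGraph κ)
    (X Y : Finset κ) (hX : X.Nonempty) (hY : Y.Nonempty) (hXY : X ∩ Y = ∅)
    (SX SY : Finset G.V) (hSX : G.IsMinCutSet X SX) (hSY : G.IsMinCutSet Y SY) :
    SX ∩ SY = ∅ := by
  obtain ⟨a1, a2, a3⟩ := hSX
  obtain ⟨b1, b2, b3⟩ := hSY
  have hd : ∀ x, x ∈ X → x ∉ Y := fun x hx hy => by
    have : x ∈ X ∩ Y := Finset.mem_inter.mpr ⟨hx, hy⟩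
    simp [hXY] at this
  have hA : ∀ x : κ, G.ι x ∈ SX \ SY ↔ x ∈ X := fun x => by
    rw [Finset.mem_sdiff, a1, b1]
    exact ⟨fun h => h.1, fun h => ⟨h, hd x h⟩⟩
  have hB : ∀ x : κ, G.ι x ∈ SY \ SX ↔ x ∈ Y := fun x => by
    rw [Finset.mem_sdiff, a1, b1]
    exact ⟨fun h => h.1, fun h => ⟨h, fun h' => hd x h' h⟩⟩
  have p := G.cutval_posimodular SX SY
  have q1 := G.termCut_le X _ hA
  have q2 := G.termCut_le Y _ hB
  have hc := a3 _ hA (by linarith)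
  have heq : SX \ SY = SX := Finset.eq_of_subset_of_card_le Finset.sdiff_subset hc
  exact Finset.disjoint_iff_inter_eq_empty.mp (Finset.sdiff_eq_self_iff_disjoint.mp heq)
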